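/- arXiv:2011.05451 — 2 statements merged into one kernel-verified Lean document; each statement's English description precedes it below -/
import Mathlib

section
/- Let L ≥ 1 and let f_{i,j} : ℝ → ℂ (for 0 ≤ i, j ≤ L−1) be continuous 1-periodic functions, each with an absolutely convergent Fourier series. Then ∫_{[0,1]^{L²}} ∫_{[0,1]^{L²}} ∏_{i=0}^{L−1} ∏_{j=0}^{L−1} f_{i,j}(x^a_{i,j} − x^a_{i,(j+1) mod L} − x^b_{i,j} + x^b_{(i+1) mod L,j}) dx^a dx^b = ∑_{ℓ∈ℤ} ∏_{i=0}^{L−1} ∏_{j=0}^{L−1} f̂_{i,j}(ℓ), where x^a and x^b each denote L² integration variables indexed by pairs (i,j) with both indices taken modulo L. -/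
open MeasureTheory

/-- The `ℓ`-th Fourier coefficient of a 1-periodic function `f : ℝ → ℂ`,
`f̂(ℓ) = ∫₀¹ f(x) e^{−2πiℓx} dx`. -/
noncomputable def fourierCoeffR (f : ℝ → ℂ) (ℓ : ℤ) : ℂ :=
  ∫ x in (0:ℝ)..1, f x * Complex.exp (-(2 * Real.pi * Complex.I * ℓ * x))

/-! Expand each `f i j` in its Fourier series. By absolute convergence the product over plaquettes
becomes a series over integer fields `m` on the lattice, which may be integrated term by term.
Summation by parts turns the phase `∑ p, m p * θ p` of the term `m` into a pairing of the discrete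
derivatives of `m` with the link variables, and the integral of that character vanishes unless both
derivatives do. On the periodic lattice only the constant fields `m = ℓ` have this property, and the
character then integrates to `1`. -/

open Filter
open scoped FourierTransform Topology

section ProductOfSeries

variable {ι : Type*} [Fintype ι] {β : ι → Type*}

theorem subset_piFinset_image_eval [DecidableEq ι] [∀ i, DecidableEq (β i)]
    (u : Finset (∀ i, β i)) : u ⊆ Fintype.piFinset fun i => u.image fun m => m i :=
  fun _ hm => Fintype.mem_piFinset.2 fun _ => Finset.mem_image_of_mem _ hm

theorem tendsto_piFinset_atTop [DecidableEq ι] :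
    Tendsto (fun s : ∀ i, Finset (β i) => Fintype.piFinset s) atTop atTop := by
  classical
  exact Monotone.tendsto_atTop_atTop (fun s t hst => Fintype.piFinset_subset s t hst)
    fun u => ⟨_, subset_piFinset_image_eval u⟩

variable {R : Type*} [NormedCommRing R] [NormOneClass R] {c : ∀ i, β i → R}

theorem summable_norm_prod_pi (hc : ∀ i, Summable fun b => ‖c i b‖) :
    Summable fun m : ∀ i, β i => ‖∏ i, c i (m i)‖ := by
  classical
  refine summable_of_sum_le (c := ∏ i, ∑' b, ‖c i b‖) (fun m => norm_nonneg _) fun u => ?_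
  let box : Finset (∀ i, β i) := Fintype.piFinset fun i => u.image fun m => m i
  calc ∑ m ∈ u, ‖∏ i, c i (m i)‖ ≤ ∑ m ∈ box, ‖∏ i, c i (m i)‖ :=
        Finset.sum_le_sum_of_subset_of_nonneg
          (subset_piFinset_image_eval u) fun m _ _ => norm_nonneg _
    _ ≤ ∑ m ∈ box, ∏ i, ‖c i (m i)‖ := Finset.sum_le_sum fun m _ => Finset.norm_prod_le _ _
    _ = ∏ i, ∑ b ∈ u.image fun m => m i, ‖c i b‖ :=
        (Finset.prod_univ_sum _ fun i b => ‖c i b‖).symm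
    _ ≤ ∏ i, ∑' b, ‖c i b‖ := Finset.prod_le_prod
        (fun i _ => Finset.sum_nonneg fun b _ => norm_nonneg _)
        fun i _ => (hc i).sum_le_tsum _ fun b _ => norm_nonneg _

-- The sum converges absolutely, so it may be evaluated along the finite boxes `∏ i, s i`, over
-- which it factors; this avoids an induction on `ι`.
theorem hasSum_prod_pi [CompleteSpace R] (hc : ∀ i, Summable fun b => ‖c i b‖) :
    HasSum (fun m : ∀ i, β i => ∏ i, c i (m i)) (∏ i, ∑' b, c i b) := by
  classical
  have heval (i : ι) : Tendsto (fun s : ∀ i, Finset (β i) => s i) atTop atTop :=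
    (Function.monotone_eval i).tendsto_atTop_atTop fun t =>
      ⟨Function.update (fun _ => ∅) i t, by simp⟩
  have hprod : Tendsto (fun s => ∑ m ∈ Fintype.piFinset s, ∏ i, c i (m i)) atTop
      (𝓝 (∏ i, ∑' b, c i b)) := by
    simp only [← Finset.prod_univ_sum]
    exact tendsto_finsetProd _ fun i _ => (hc i).of_norm.hasSum.comp (heval i)
  have hsum := (summable_norm_prod_pi hc).of_norm.hasSum
  exact tendsto_nhds_unique (hsum.comp tendsto_piFinset_atTop) hprod ▸ hsum

end ProductOfSeries

theorem tsum_mul_ite_eq_const {P β 𝕜 : Type*} [DecidableEq β] [Fintype P]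
    [NonAssocSemiring 𝕜] [TopologicalSpace 𝕜] (q : P) (F : (P → β) → 𝕜) :
    ∑' m : P → β, F m * (if m = Function.const P (m q) then 1 else 0) =
      ∑' ℓ : β, F (Function.const P ℓ) := by
  have : Nonempty P := ⟨q⟩
  rw [← (Function.const_injective (α := P) (β := β)).tsum_eq]
  · simp
  · intro m hm
    by_contra hconst
    exact hm (by simp [show m ≠ Function.const P (m q) from fun h => hconst ⟨m q, h.symm⟩])

theorem integral_tsum_mul_of_norm_le {ι X 𝕜 : Type*} [RCLike 𝕜] [Countable ι]
    [MeasurableSpace X] {μ : Measure X} [IsFiniteMeasure μ] {c : ι → 𝕜} {g : ι → X → 𝕜} {B : ℝ}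
    (hc : Summable fun m => ‖c m‖) (hg : ∀ m, AEStronglyMeasurable (g m) μ)
    (hB : ∀ m x, ‖g m x‖ ≤ B) :
    ∫ x, ∑' m, c m * g m x ∂μ = ∑' m, c m * ∫ x, g m x ∂μ := by
  have hint : ∀ m, Integrable (g m) μ := fun m => .of_bound (hg m) B (.of_forall (hB m))
  rw [← integral_tsum_of_summable_integral_norm fun m => (hint m).const_mul (c m)]
  · simp only [integral_const_mul]
  · refine (hc.mul_right (μ.real Set.univ * B)).of_nonneg_of_le
      (fun m => integral_nonneg fun x => norm_nonneg _) fun m => ?_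
    simp only [norm_mul, integral_const_mul]
    gcongr
    simpa using integral_mono (hint m).norm (integrable_const B) (hB m)

theorem setIntegral_Icc_pi_prod {ι 𝕜 : Type*} [Fintype ι] [RCLike 𝕜] {E : ι → Type*}
    [∀ i, MeasureSpace (E i)] [∀ i, Preorder (E i)]
    [∀ i, SigmaFinite (volume : Measure (E i))] (a b : ∀ i, E i) (g : ∀ i, E i → 𝕜) :
    ∫ x in Set.Icc a b, ∏ i, g i (x i) = ∏ i, ∫ y in Set.Icc (a i) (b i), g i y := by
  rw [← Set.pi_univ_Icc, volume_pi, Measure.restrict_pi_pi, integral_fintype_prod_eq_prod]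

section FourierChar

theorem fourierChar_intCast_mul (ℓ : ℤ) (x : ℝ) :
    (𝐞 (ℓ * x) : ℂ) = Complex.exp (2 * Real.pi * Complex.I * ℓ * x) := by
  rw [Real.fourierChar_apply]
  push_cast
  ring_nf

theorem setIntegral_Icc_fourierChar (k : ℤ) :
    ∫ x in Set.Icc (0 : ℝ) 1, (𝐞 (k * x) : ℂ) = if k = 0 then 1 else 0 := by
  rw [integral_Icc_eq_integral_Ioc, ← intervalIntegral.integral_of_le zero_le_one]
  split_ifs with hk
  · simp [hk]
  · have hne : (2 * Real.pi * Complex.I * k : ℂ) ≠ 0 := by simp [hk, Real.pi_ne_zero]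
    have hperiod : Complex.exp (2 * Real.pi * Complex.I * k) = 1 :=
      Complex.exp_eq_one_iff.2 ⟨k, by ring⟩
    simp only [fourierChar_intCast_mul]
    rw [integral_exp_mul_complex hne]
    simp [hperiod]

theorem fourierChar_sum {ι : Type*} (s : Finset ι) (t : ι → ℝ) :
    (𝐞 (∑ i ∈ s, t i) : ℂ) = ∏ i ∈ s, (𝐞 (t i) : ℂ) :=
  map_prod (Circle.coeHom.comp Real.fourierChar.toMonoidHom)
    (fun i => Multiplicative.ofAdd (t i)) s

theorem setIntegral_Icc_fourierChar_sum {ι κ : Type*} [Fintype ι] [Fintype κ] (k : ι × κ → ℤ) :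
    ∫ x in Set.Icc (0 : ι → κ → ℝ) 1, (𝐞 (∑ p, k p * x p.1 p.2) : ℂ) =
      if k = 0 then 1 else 0 := by
  calc ∫ x in Set.Icc (0 : ι → κ → ℝ) 1, (𝐞 (∑ p, k p * x p.1 p.2) : ℂ)
      = ∫ x in Set.Icc (0 : ι → κ → ℝ) 1, ∏ i, ∏ j, (𝐞 (k (i, j) * x i j) : ℂ) := by
        simp only [fourierChar_sum, Fintype.prod_prod_type]
    _ = ∏ i, ∏ j, ∫ t in Set.Icc (0 : ℝ) 1, (𝐞 (k (i, j) * t) : ℂ) := by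
        rw [setIntegral_Icc_pi_prod 0 1 fun i (y : κ → ℝ) => ∏ j, (𝐞 (k (i, j) * y j) : ℂ)]
        exact Finset.prod_congr rfl fun i _ =>
          setIntegral_Icc_pi_prod 0 1 fun j (t : ℝ) => (𝐞 (k (i, j) * t) : ℂ)
    _ = if k = 0 then 1 else 0 := by
        simp only [setIntegral_Icc_fourierChar, Fintype.prod_boole, funext_iff, Prod.forall,
          Pi.zero_apply]

theorem summable_norm_mul_fourierChar {c : ℤ → ℂ} (hc : Summable fun ℓ => ‖c ℓ‖) (x : ℝ) :
    Summable fun ℓ : ℤ => ‖c ℓ * 𝐞 (ℓ * x)‖ := by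
  simpa only [norm_mul, Circle.norm_coe, mul_one] using hc

theorem continuous_tsum_mul_fourierChar {c : ℤ → ℂ} (hc : Summable fun ℓ => ‖c ℓ‖) :
    Continuous fun x : ℝ => ∑' ℓ : ℤ, c ℓ * 𝐞 (ℓ * x) :=
  continuous_tsum (fun ℓ => by fun_prop) hc fun ℓ x => by
    rw [norm_mul, Circle.norm_coe, mul_one]

variable {ι : Type*} [Fintype ι] {c : ι → ℤ → ℂ}

theorem prod_tsum_mul_fourierChar (hc : ∀ i, Summable fun ℓ => ‖c i ℓ‖) (t : ι → ℝ) :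
    ∏ i, ∑' ℓ : ℤ, c i ℓ * 𝐞 (ℓ * t i) =
      ∑' m : ι → ℤ, (∏ i, c i (m i)) * 𝐞 (∑ i, m i * t i) := by
  rw [← (hasSum_prod_pi fun i => summable_norm_mul_fourierChar (hc i) (t i)).tsum_eq]
  simp only [Finset.prod_mul_distrib, fourierChar_sum]

variable {X : Type*} [MeasurableSpace X] {μ : Measure X} [IsFiniteMeasure μ] {θ : ι → X → ℝ}

theorem integrable_prod_tsum_mul_fourierChar (hc : ∀ i, Summable fun ℓ => ‖c i ℓ‖)
    (hθ : ∀ i, AEMeasurable (θ i) μ) :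
    Integrable (fun x => ∏ i, ∑' ℓ : ℤ, c i ℓ * 𝐞 (ℓ * θ i x)) μ := by
  refine .of_bound (C := ∏ i, ∑' ℓ, ‖c i ℓ‖) ?_ (.of_forall fun x => ?_)
  · exact Finset.aestronglyMeasurable_fun_prod _ fun i _ =>
      (continuous_tsum_mul_fourierChar (hc i)).measurable.comp_aemeasurable (hθ i)
        |>.aestronglyMeasurable
  · rw [norm_prod]
    refine Finset.prod_le_prod (fun i _ => norm_nonneg _) fun i _ => ?_
    simpa only [norm_mul, Circle.norm_coe, mul_one] using
      norm_tsum_le_tsum_norm (summable_norm_mul_fourierChar (hc i) (θ i x))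

theorem integral_prod_tsum_mul_fourierChar (hc : ∀ i, Summable fun ℓ => ‖c i ℓ‖)
    (hθ : ∀ i, AEMeasurable (θ i) μ) :
    ∫ x, ∏ i, ∑' ℓ : ℤ, c i ℓ * 𝐞 (ℓ * θ i x) ∂μ =
      ∑' m : ι → ℤ, (∏ i, c i (m i)) * ∫ x, (𝐞 (∑ i, m i * θ i x) : ℂ) ∂μ := by
  have hmeas (m : ι → ℤ) : AEStronglyMeasurable (fun x => (𝐞 (∑ i, m i * θ i x) : ℂ)) μ :=
    (by fun_prop : Continuous fun y : ℝ => (𝐞 y : ℂ)).measurable.comp_aemeasurable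
      (by fun_prop : AEMeasurable (fun x => ∑ i, m i * θ i x) μ) |>.aestronglyMeasurable
  simp only [prod_tsum_mul_fourierChar hc]
  exact integral_tsum_mul_of_norm_le (summable_norm_prod_pi hc) hmeas fun m x =>
    (Circle.norm_coe _).le

end FourierChar

section PeriodicLattice

theorem sum_mul_comp_add_right {G R : Type*} [AddGroup G] [Fintype G]
    [NonUnitalNonAssocSemiring R] (e : G) (m x : G → R) :
    ∑ p, m p * x (p + e) = ∑ p, m (p - e) * x p := by
  simpa using Equiv.sum_comp (Equiv.addRight e) fun p => m (p - e) * x p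

theorem periodic_iff_forall_sub_eq {G β : Type*} [AddGroup G] {m : G → β} {e : G} :
    Function.Periodic m e ↔ ∀ p, m (p - e) = m p :=
  ⟨Function.Periodic.sub_eq, fun h p => by simpa using (h (p + e)).symm⟩

open Fin.CommRing in
theorem apply_eq_apply_zero_of_periodic_one {n : ℕ} [NeZero n] {β : Type*} {g : Fin n → β}
    (hg : Function.Periodic g 1) (j : Fin n) : g j = g 0 := by
  simpa using hg.nat_mul_eq j.val

variable {L M : ℕ} [NeZero L] [NeZero M]

theorem eq_const_iff_periodic {β : Type*} (m : Fin L × Fin M → β) :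
    m = Function.const _ (m 0) ↔ Function.Periodic m (0, 1) ∧ Function.Periodic m (1, 0) := by
  refine ⟨fun h => h ▸ ⟨fun _ => rfl, fun _ => rfl⟩, fun ⟨h₁, h₂⟩ => funext fun ⟨i, j⟩ => ?_⟩
  have hrow : Function.Periodic (fun j => m (i, j)) 1 := fun j => by simpa using h₁ (i, j)
  have hcol : Function.Periodic (fun i => m (i, 0)) 1 := fun i => by simpa using h₂ (i, 0)
  exact (apply_eq_apply_zero_of_periodic_one hrow j).trans
    (apply_eq_apply_zero_of_periodic_one hcol i)

/-- The plaquette variable of a lattice gauge field on the periodic `L × M` lattice: the signed sum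
of the link variables around the elementary square based at the site `p`. The links `a i j` and
`a i (j + 1)` are opposite sides, as are `b i j` and `b (i + 1) j`. Periodicity is built in, since
addition in `Fin L` and `Fin M` is modular. -/
def plaquetteAngle {R : Type*} [AddCommGroup R] (a b : Fin L → Fin M → R)
    (p : Fin L × Fin M) : R :=
  a p.1 p.2 - a p.1 (p.2 + 1) - b p.1 p.2 + b (p.1 + 1) p.2

theorem sum_mul_plaquetteAngle {R : Type*} [CommRing R] (m : Fin L × Fin M → R)
    (a b : Fin L → Fin M → R) :
    ∑ p, m p * plaquetteAngle a b p =
      ∑ p, (m p - m (p - (0, 1))) * a p.1 p.2 + ∑ p, (m (p - (1, 0)) - m p) * b p.1 p.2 := by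
  have ha := sum_mul_comp_add_right (0, 1) m (Function.uncurry a)
  have hb := sum_mul_comp_add_right (1, 0) m (Function.uncurry b)
  simp only [Function.uncurry, Prod.fst_add, Prod.snd_add, add_zero] at ha hb
  simp only [plaquetteAngle, mul_add, mul_sub, sub_mul, Finset.sum_add_distrib,
    Finset.sum_sub_distrib, ha, hb]
  ring

theorem continuous_plaquetteAngle (p : Fin L × Fin M) :
    Continuous fun x : (Fin L → Fin M → ℝ) × (Fin L → Fin M → ℝ) =>
      plaquetteAngle x.1 x.2 p := by
  unfold plaquetteAngle
  fun_prop

theorem integral_fourierChar_sum_plaquetteAngle (m : Fin L × Fin M → ℤ) :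
    ∫ x : (Fin L → Fin M → ℝ) × (Fin L → Fin M → ℝ), (𝐞 (∑ p, m p * plaquetteAngle x.1 x.2 p) : ℂ)
        ∂((volume.restrict (Set.Icc 0 1)).prod (volume.restrict (Set.Icc 0 1))) =
      if m = Function.const _ (m 0) then 1 else 0 := by
  let ka : Fin L × Fin M → ℤ := fun p => m p - m (p - (0, 1))
  let kb : Fin L × Fin M → ℤ := fun p => m (p - (1, 0)) - m p
  have hka : ka = 0 ↔ Function.Periodic m (0, 1) := by
    rw [periodic_iff_forall_sub_eq, funext_iff]
    exact forall_congr' fun p => sub_eq_zero.trans eq_comm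
  have hkb : kb = 0 ↔ Function.Periodic m (1, 0) := by
    rw [periodic_iff_forall_sub_eq, funext_iff]
    exact forall_congr' fun p => sub_eq_zero
  have hsplit (a b : Fin L → Fin M → ℝ) : (𝐞 (∑ p, m p * plaquetteAngle a b p) : ℂ) =
      𝐞 (∑ p, ka p * a p.1 p.2) * 𝐞 (∑ p, kb p * b p.1 p.2) := by
    simp only [sum_mul_plaquetteAngle fun p => (m p : ℝ), AddChar.map_add_eq_mul, Circle.coe_mul,
      ka, kb, Int.cast_sub]
  simp only [hsplit]
  rw [integral_prod_mul
    (fun a : Fin L → Fin M → ℝ => (𝐞 (∑ p, ka p * a p.1 p.2) : ℂ))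
    (fun b : Fin L → Fin M → ℝ => (𝐞 (∑ p, kb p * b p.1 p.2) : ℂ))]
  simp only [setIntegral_Icc_fourierChar_sum, ite_zero_mul_ite_zero, mul_one]
  exact if_congr (by rw [hka, hkb, eq_const_iff_periodic]) rfl rfl

theorem stmt3_general (f : Fin L → Fin M → ℝ → ℂ) (c : Fin L → Fin M → ℤ → ℂ)
    (hc : ∀ i j, Summable fun ℓ => ‖c i j ℓ‖)
    (hf : ∀ i j x, f i j x = ∑' ℓ : ℤ, c i j ℓ * 𝐞 (ℓ * x)) :
    (∫ xa in Set.Icc (0 : Fin L → Fin M → ℝ) 1, ∫ xb in Set.Icc (0 : Fin L → Fin M → ℝ) 1,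
      ∏ i, ∏ j, f i j (xa i j - xa i (j + 1) - xb i j + xb (i + 1) j)) =
      ∑' ℓ : ℤ, ∏ i, ∏ j, c i j ℓ := by
  let μ : Measure (Fin L → Fin M → ℝ) := volume.restrict (Set.Icc 0 1)
  have : IsFiniteMeasure μ := isFiniteMeasure_restrict.2 isCompact_Icc.measure_ne_top
  have hc' (p : Fin L × Fin M) : Summable fun ℓ => ‖c p.1 p.2 ℓ‖ := hc p.1 p.2
  have hθ (p : Fin L × Fin M) : AEMeasurable (fun x => plaquetteAngle x.1 x.2 p) (μ.prod μ) :=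
    (continuous_plaquetteAngle p).aemeasurable
  calc _ = ∫ xa, ∫ xb, ∏ p : Fin L × Fin M,
          ∑' ℓ : ℤ, c p.1 p.2 ℓ * 𝐞 (ℓ * plaquetteAngle xa xb p) ∂μ ∂μ := by
        simp only [μ, hf, plaquetteAngle, Fintype.prod_prod_type]
    _ = ∫ x, ∏ p : Fin L × Fin M,
          ∑' ℓ : ℤ, c p.1 p.2 ℓ * 𝐞 (ℓ * plaquetteAngle x.1 x.2 p) ∂(μ.prod μ) :=
        (integral_prod _ (integrable_prod_tsum_mul_fourierChar hc' hθ)).symm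
    _ = ∑' m : Fin L × Fin M → ℤ, (∏ p, c p.1 p.2 (m p)) *
          ∫ x, (𝐞 (∑ p, m p * plaquetteAngle x.1 x.2 p) : ℂ) ∂(μ.prod μ) :=
        integral_prod_tsum_mul_fourierChar hc' hθ
    _ = ∑' ℓ : ℤ, ∏ i, ∏ j, c i j ℓ := by
        simp only [μ, integral_fourierChar_sum_plaquetteAngle, tsum_mul_ite_eq_const,
          Function.const_apply, Fintype.prod_prod_type]

end PeriodicLattice

theorem stmt3 (L : ℕ) [NeZero L] (f : Fin L → Fin L → ℝ → ℂ)
    (hcont : ∀ i j, Continuous (f i j))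
    (hper : ∀ i j (x : ℝ), f i j (x + 1) = f i j x)
    (habs : ∀ i j, Summable fun ℓ : ℤ => ‖fourierCoeffR (f i j) ℓ‖)
    (hrep : ∀ i j (x : ℝ),
      f i j x = ∑' ℓ : ℤ, fourierCoeffR (f i j) ℓ *
        Complex.exp (2 * Real.pi * Complex.I * ℓ * x)) :
    (∫ xa in Set.Icc (0 : Fin L → Fin L → ℝ) 1,
      ∫ xb in Set.Icc (0 : Fin L → Fin L → ℝ) 1,
        ∏ i, ∏ j, f i j (xa i j - xa i (j + 1) - xb i j + xb (i + 1) j)) =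
      ∑' ℓ : ℤ, ∏ i, ∏ j, fourierCoeffR (f i j) ℓ := by
  exact stmt3_general f _ habs fun i j x => by
    simpa only [fourierChar_intCast_mul] using hrep i j x
end

section
/- Let L ≥ 1 and let f_{i,j} : ℝ → ℂ (for 0 ≤ i, j ≤ L−1) be 1-periodic functions, integrable on [0,1] and bounded. Define g_i : ℝ^L → ℂ by g_i(y) = ∫_{[0,1]^L} ∏_{j=0}^{L−1} f_{i,j}(x_j − x_{(j+1) mod L} + y_j) dx. Then the 2L²-dimensional integral factorizes as ∫_{[0,1]^{2L²}} ∏_{i=0}^{L−1} ∏_{j=0}^{L−1} f_{i,j}(x^a_{i,j} − x^a_{i,(j+1) mod L} − x^b_{i,j} + x^b_{(i+1) mod L,j}) dx^a dx^b = ∫_{[0,1]^{L²}} ∏_{i=0}^{L−1} g_i(x^b_{(i+1) mod L} − x^b_i) dx^b, where x^b_i = (x^b_{i,0}, …, x^b_{i,L−1}) ∈ [0,1]^L denotes the i-th row of the x^b variables. -/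
open MeasureTheory

/-!
Once the `b`-variables are fixed, the `a`-variables decouple row by row: the `i`-th row `x^a_i`
enters only the `i`-th inner product, in which the `b`-variables act as the shift
`y = x^b_{i+1} - x^b_i`. Integrating out the `a`-variables first therefore produces `∏ i, g i`.
Fubini is legitimate because the integrand is bounded and each factor `f i j` is composed with a
linear functional, which is either zero or pulls Lebesgue null sets back to null sets.
-/

lemma aestronglyMeasurable_of_periodic {E : Type*} [TopologicalSpace E]
    [TopologicalSpace.PseudoMetrizableSpace E] {f : ℝ → E} {T t : ℝ} (hf : Function.Periodic f T)
    (hT : 0 < T) (hm : AEStronglyMeasurable f (volume.restrict (Set.Icc t (t + T)))) :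
    AEStronglyMeasurable f volume := by
  rw [← Measure.restrict_univ (μ := volume), ← iUnion_Icc_add_zsmul hT t,
    aestronglyMeasurable_iUnion_iff]
  intro n
  have hpre : (fun x : ℝ => x - n • T) ⁻¹' Set.Icc t (t + T) =
      Set.Icc (t + n • T) (t + (n + 1) • T) := by
    rw [Set.preimage_sub_const_Icc, add_zsmul, one_zsmul, add_right_comm, add_assoc t (n • T) T]
  have hshift : MeasurePreserving (fun x : ℝ => x - n • T)
      (volume.restrict (Set.Icc (t + n • T) (t + (n + 1) • T)))
      (volume.restrict (Set.Icc t (t + T))) :=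
    hpre ▸ (measurePreserving_sub_right volume (n • T)).restrict_preimage measurableSet_Icc
  exact (hm.comp_measurePreserving hshift).congr (ae_of_all _ fun _ => hf.sub_zsmul_eq n)

section LinearFunctional

variable {𝕜 V : Type*} [NontriviallyNormedField 𝕜] [CompleteSpace 𝕜] [MeasurableSpace 𝕜]
  [BorelSpace 𝕜] [NormedAddCommGroup V] [NormedSpace 𝕜 V] [LocallyCompactSpace V]
  [MeasurableSpace V] [BorelSpace V] {μ : Measure V} [μ.IsAddHaarMeasure]
  {ν : Measure 𝕜} [ν.IsAddHaarMeasure]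

lemma aestronglyMeasurable_comp_linearFunctional {E : Type*} [TopologicalSpace E] {f : 𝕜 → E}
    (hf : AEStronglyMeasurable f ν) (l : V →ₗ[𝕜] 𝕜) :
    AEStronglyMeasurable (fun v => f (l v)) μ := by
  obtain rfl | hl := eq_or_ne l 0
  · exact aestronglyMeasurable_const (b := f 0)
  · have : FiniteDimensional 𝕜 V := .of_locallyCompactSpace 𝕜
    obtain ⟨c, -, hc⟩ := l.exists_map_addHaar_eq_smul_addHaar μ ν (LinearMap.surjective hl)
    exact hf.comp_quasiMeasurePreserving
      ⟨l.continuous_of_finiteDimensional.measurable, hc ▸ Measure.smul_absolutelyContinuous⟩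

lemma integrableOn_prod_comp_linearFunctional {ι R : Type*} [Fintype ι] [NormedCommRing R]
    [NormOneClass R] {f : ι → 𝕜 → R} (hm : ∀ i, AEStronglyMeasurable (f i) ν)
    (hbd : ∀ i, ∃ C : ℝ, ∀ x, ‖f i x‖ ≤ C) (l : ι → V →ₗ[𝕜] 𝕜) {s : Set V} (hs : μ s < ⊤) :
    IntegrableOn (fun v => ∏ i, f i (l i v)) s μ := by
  choose C hC using hbd
  refine .of_bound hs ?_ (∏ i, C i) (ae_of_all _ fun v => ?_)
  · exact (Finset.aestronglyMeasurable_fun_prod _ fun i _ =>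
      aestronglyMeasurable_comp_linearFunctional (hm i) (l i)).restrict
  · exact (Finset.norm_prod_le _ _).trans
      (Finset.prod_le_prod (fun _ _ => norm_nonneg _) fun i _ => hC i _)

end LinearFunctional

lemma volume_restrict_Icc_prod {α β : Type*} [MeasureSpace α] [MeasureSpace β] [Preorder α]
    [Preorder β] [SFinite (volume : Measure α)] [SFinite (volume : Measure β)] (a b : α × β) :
    volume.restrict (Set.Icc a b) =
      (volume.restrict (Set.Icc a.1 b.1)).prod (volume.restrict (Set.Icc a.2 b.2)) := by
  rw [Measure.prod_restrict, ← Set.Icc_prod_eq, Measure.volume_eq_prod]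

lemma volume_restrict_Icc_pi {ι : Type*} [Fintype ι] {α : ι → Type*} [∀ i, MeasureSpace (α i)]
    [∀ i, Preorder (α i)] [∀ i, SigmaFinite (volume : Measure (α i))] (a b : ∀ i, α i) :
    volume.restrict (Set.Icc a b) =
      Measure.pi fun i => volume.restrict (Set.Icc (a i) (b i)) := by
  rw [← Measure.restrict_pi_pi, Set.pi_univ_Icc, volume_pi]

lemma integral_pi_prod_eq_integral_prod_integral {ι β 𝕜 : Type*} [Fintype ι] [RCLike 𝕜]
    {α : ι → Type*} [∀ i, MeasurableSpace (α i)] [MeasurableSpace β] {μ : ∀ i, Measure (α i)}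
    [∀ i, SigmaFinite (μ i)] {ν : Measure β} [SFinite ν] {h : ∀ i, α i → β → 𝕜}
    (hh : Integrable (fun p : (∀ i, α i) × β => ∏ i, h i (p.1 i) p.2) ((Measure.pi μ).prod ν)) :
    ∫ p : (∀ i, α i) × β, ∏ i, h i (p.1 i) p.2 ∂(Measure.pi μ).prod ν =
      ∫ y, ∏ i, ∫ x, h i x y ∂μ i ∂ν := by
  rw [integral_prod_symm _ hh]
  exact integral_congr_ae (ae_of_all _ fun y =>
    integral_fintype_prod_eq_prod fun i x => h i x y)

section Plaquette

variable {ι κ : Type*}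

/-- The signed sum of the four link variables around the plaquette at the site `(i, j)`, as a linear
functional of the link configuration. The two components of the configuration are the links of
type `a` and `b`; `σ` and `τ` are the shifts of the lattice in the first and second index. -/
def plaquette (σ : ι → ι) (τ : κ → κ) (i : ι) (j : κ) :
    (ι → κ → ℝ) × (ι → κ → ℝ) →ₗ[ℝ] ℝ where
  toFun x := x.1 i j - x.1 i (τ j) - x.2 i j + x.2 (σ i) j
  map_add' x y := by
    simp only [Prod.fst_add, Prod.snd_add, Pi.add_apply]
    ring
  map_smul' c x := by
    simp only [Prod.smul_fst, Prod.smul_snd, Pi.smul_apply, smul_eq_mul, RingHom.id_apply]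
    ring

variable [Fintype ι] [Fintype κ]

lemma integrableOn_prod_comp_plaquette {R : Type*} [NormedCommRing R] [NormOneClass R]
    (σ : ι → ι) (τ : κ → κ) {f : ι → κ → ℝ → R} (hm : ∀ i j, AEStronglyMeasurable (f i j) volume)
    (hbd : ∀ i j, ∃ C : ℝ, ∀ x : ℝ, ‖f i j x‖ ≤ C) {s : Set ((ι → κ → ℝ) × (ι → κ → ℝ))}
    (hs : IsCompact s) :
    IntegrableOn (fun x => ∏ i, ∏ j, f i j (plaquette σ τ i j x)) s := by
  have : (volume : Measure (ι → κ → ℝ)).IsAddHaarMeasure := Measure.pi.isAddHaarMeasure _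
  have : (volume : Measure ((ι → κ → ℝ) × (ι → κ → ℝ))).IsAddHaarMeasure :=
    Measure.prod.instIsAddHaarMeasure volume volume
  simpa only [Fintype.prod_prod_type] using
    integrableOn_prod_comp_linearFunctional (fun k : ι × κ => hm k.1 k.2)
      (fun k => hbd k.1 k.2) (fun k => plaquette σ τ k.1 k.2) hs.measure_lt_top

theorem stmt9_general {𝕜 : Type*} [RCLike 𝕜] (σ : ι → ι) (τ : κ → κ) {f : ι → κ → ℝ → 𝕜}
    (hm : ∀ i j, AEStronglyMeasurable (f i j) volume)
    (hbd : ∀ i j, ∃ C : ℝ, ∀ x : ℝ, ‖f i j x‖ ≤ C) {g : ι → (κ → ℝ) → 𝕜}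
    (hg : ∀ i (y : κ → ℝ),
      g i y = ∫ x in Set.Icc (0 : κ → ℝ) 1, ∏ j, f i j (x j - x (τ j) + y j)) :
    (∫ x in Set.Icc (0 : (ι → κ → ℝ) × (ι → κ → ℝ)) 1,
      ∏ i, ∏ j, f i j (x.1 i j - x.1 i (τ j) - x.2 i j + x.2 (σ i) j)) =
      ∫ xb in Set.Icc (0 : ι → κ → ℝ) 1, ∏ i, g i (xb (σ i) - xb i) := by
  have hcube : volume.restrict (Set.Icc (0 : (ι → κ → ℝ) × (ι → κ → ℝ)) 1) =
      (Measure.pi fun _ => volume.restrict (Set.Icc (0 : κ → ℝ) 1)).prod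
        (volume.restrict (Set.Icc 0 1)) :=
    (volume_restrict_Icc_prod 0 1).trans
      (congrArg (Measure.prod · _) (volume_restrict_Icc_pi (0 : ι → κ → ℝ) 1))
  have hint := integrableOn_prod_comp_plaquette σ τ hm hbd (isCompact_Icc (a := 0) (b := 1))
  have hshift (i : ι) (xb : ι → κ → ℝ) : g i (xb (σ i) - xb i) =
      ∫ x in Set.Icc (0 : κ → ℝ) 1, ∏ j, f i j (x j - x (τ j) - xb i j + xb (σ i) j) := by
    simp only [hg, Pi.sub_apply, add_sub, add_sub_right_comm]
  rw [IntegrableOn, hcube] at hint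
  simp only [hshift, hcube]
  exact integral_pi_prod_eq_integral_prod_integral (h := fun i (x : κ → ℝ) (xb : ι → κ → ℝ) =>
    ∏ j, f i j (x j - x (τ j) - xb i j + xb (σ i) j)) hint

end Plaquette

theorem stmt9 (L : ℕ) [NeZero L] (f : Fin L → Fin L → ℝ → ℂ)
    (hper : ∀ i j (x : ℝ), f i j (x + 1) = f i j x)
    (hint : ∀ i j, IntegrableOn (f i j) (Set.Icc (0 : ℝ) 1))
    (hbd : ∀ i j, ∃ C : ℝ, ∀ x : ℝ, ‖f i j x‖ ≤ C)
    (g : Fin L → (Fin L → ℝ) → ℂ)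
    (hg : ∀ i (y : Fin L → ℝ),
      g i y = ∫ x in Set.Icc (0 : Fin L → ℝ) 1, ∏ j, f i j (x j - x (j + 1) + y j)) :
    (∫ x in Set.Icc (0 : (Fin L → Fin L → ℝ) × (Fin L → Fin L → ℝ)) 1,
      ∏ i, ∏ j, f i j (x.1 i j - x.1 i (j + 1) - x.2 i j + x.2 (i + 1) j)) =
      ∫ xb in Set.Icc (0 : Fin L → Fin L → ℝ) 1,
        ∏ i, g i (xb (i + 1) - xb i) :=
  stmt9_general (· + 1) (· + 1) (fun i j => aestronglyMeasurable_of_periodic (hper i j)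
    one_pos (t := 0) (by simpa only [zero_add] using (hint i j).aestronglyMeasurable)) hbd hg
end
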